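/- arXiv:1607.04501 — 2 statements merged into one kernel-verified Lean document; each statement's English description precedes it below -/
import Mathlib

section
/- (Lemma 4, part 2) Let 2 ≤ k < l and write l = kd + r with d ≥ 1 and 1 ≤ r ≤ k. Then for any 0 ≤ j ≤ l−1, φ_k^{l−k}(Y_j) = X_{max(k−l+j, 0)}, where Y_0 = [l], Y_j = [j, l−j] for 1 ≤ j ≤ l−1, and X_0, …, X_{k−1} are the distinguished l-configurations. -/
/-!
The proof passes to infinite configurations, where no ball is ever deleted. For an infinite
configuration `X` and `1 ≤ k ≤ n`, the move commutes with the `n`-ball projection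
(`moveFin_proj`): the position of the `k`-th ball from the right is not affected by the
projection, and deleting the leftmost of `n + 1` balls turns `π_{n+1}` into `π_n`.

Hence `φ_k^{l-k}(Y_j)` is the `l`-ball projection of `φ_k^{l-k}` applied to the extension
`[…, 1, 1, j, l-j]` of `Y_j`, and the infinite dynamics is explicit. While the rightmost bin has
fewer than `k` balls and the two rightmost bins together have at least `k`, each move adds a ball
to the rightmost bin (`move_iterate_fill`). As soon as it has at least `k` balls, each block of `k`
moves creates a new rightmost bin and fills it with `k` balls (`move_iterate_new`). The `l - k` new
balls together with the `k` rightmost old ones are the `l` balls kept by the projection, and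
comparing bin by bin with `X_i` for `i = max(k - l + j, 0)` finishes the proof.
-/

open Finset

/-! Bins are indexed by `t : ℕ`, where index `t` stands for the bin labeled `-t`
in the paper (so `t = 0` is the rightmost bin).  A configuration is a function
`X : ℕ → ℕ`, `X t` being the number of balls in bin `t`. -/

/-- `binSum X t` is the number of balls in bins `0, …, t-1`, i.e. strictly to the
right of bin `t`.  In the paper's notation this is `Σ_{j = -t+1}^{0} X(j)`. -/
def binSum (X : ℕ → ℕ) (t : ℕ) : ℕ := ∑ m ∈ Finset.range t, X m

/-- An infinite configuration: every bin contains a positive number of balls. -/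
def IsInfConf (X : ℕ → ℕ) : Prop := ∀ t, 0 < X t

/-- An `n`-configuration: for some `p ≥ 1`, bins `0, …, p-1` are nonempty, all the
other bins are empty, and the total number of balls is `n`. -/
def IsNConf (n : ℕ) (X : ℕ → ℕ) : Prop :=
  ∃ p : ℕ, 1 ≤ p ∧ (∀ t, t < p → 0 < X t) ∧ (∀ t, p ≤ t → X t = 0) ∧ binSum X p = n

/-- The `n`-ball projection `π_n`: keep the `n` rightmost balls, erase the others.
(Truncated subtraction makes the value `0` as soon as `binSum X t ≥ n`.) -/
def proj (n : ℕ) (X : ℕ → ℕ) : ℕ → ℕ := fun t => min (X t) (n - binSum X t)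

/-- The move `φ_k` on infinite configurations: if the rightmost bin contains at
least `k` balls, create a new rightmost bin containing one ball (shifting
everything); otherwise add one ball to the bin immediately to the right of the
bin containing the `k`-th ball counted from the right. -/
noncomputable def move (k : ℕ) (X : ℕ → ℕ) : ℕ → ℕ :=
  if k ≤ X 0 then fun t => if t = 0 then 1 else X (t - 1)
  else fun t => if t = sInf {b : ℕ | k ≤ binSum X (b + 1)} - 1 then X t + 1 else X t

/-- Delete one ball from the leftmost nonempty bin. -/
noncomputable def removeLeft (X : ℕ → ℕ) : ℕ → ℕ :=
  fun t => if t = sSup {b : ℕ | 0 < X b} then X t - 1 else X t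

/-- The move `φ_k` on `n`-configurations: add a ball to the bin immediately to the
right of the bin containing the `k`-th ball from the right (creating a new
rightmost bin if needed), then delete one ball from the leftmost nonempty bin. -/
noncomputable def moveFin (k : ℕ) (X : ℕ → ℕ) : ℕ → ℕ := removeLeft (move k X)

/-- Apply an algorithm, i.e. a finite composition of moves, to an infinite
configuration.  `applyAlg [k₁, …, kₘ] X = φ_{k₁}(φ_{k₂}(⋯ φ_{kₘ}(X)))`. -/
noncomputable def applyAlg (w : List ℕ) (X : ℕ → ℕ) : ℕ → ℕ := w.foldr move X

/-- Apply an algorithm to a finite configuration. -/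
noncomputable def applyAlgFin (w : List ℕ) (X : ℕ → ℕ) : ℕ → ℕ := w.foldr moveFin X

/-- The configuration denoted `[a₁, …, a_p]` in the paper: the list is read from
the leftmost nonempty bin to the rightmost bin. -/
def ofList (L : List ℕ) : ℕ → ℕ := fun t => L.reverse.getD t 0

/-- The distinguished `l`-configurations `X_i` (for `l = k*d + r`, `1 ≤ r ≤ k`):
`X_0 = [k, …, k, r]` (`d` bins of `k` balls), `X_i = [i, k, …, k, r-i]` (`d` bins
of `k` balls) for `1 ≤ i ≤ r-1`, and `X_i = [i, k, …, k, k+r-i]` (`d-1` bins of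
`k` balls) for `r ≤ i ≤ k-1`. -/
def distConf (k d r i : ℕ) : ℕ → ℕ :=
  if i = 0 then ofList (List.replicate d k ++ [r])
  else if i < r then ofList (i :: (List.replicate d k ++ [r - i]))
  else ofList (i :: (List.replicate (d - 1) k ++ [k + r - i]))

/-- The `l`-configurations `Y_j`: `Y_0 = [l]` and `Y_j = [j, l-j]` for `1 ≤ j ≤ l-1`. -/
def yConf (l j : ℕ) : ℕ → ℕ := if j = 0 then ofList [l] else ofList [j, l - j]

/-- The map `f` from the paper: `f(i) = (k - l + d·i)₊` for `0 ≤ i ≤ k-r-1` and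
`f(i) = (k - (d+1)(k-i))₊` for `k-r ≤ i ≤ k-1` (truncated ℕ-subtraction realizes
the positive part). -/
def fMap (k l d r : ℕ) (i : ℕ) : ℕ :=
  if i < k - r then k + d * i - l else k - (d + 1) * (k - i)

/-- The algorithm `Ψ = φ_k^{l-k} ∘ φ_l^{dr + k·d(d-1)/2} ∘ φ_k^{k-r}` acting on
`l`-configurations. -/
noncomputable def Psi (k l d r : ℕ) (X : ℕ → ℕ) : ℕ → ℕ :=
  (moveFin k)^[l - k] ((moveFin l)^[d * r + k * (d * (d - 1)) / 2] ((moveFin k)^[k - r] X))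

/-! ### Moves and projections -/

lemma binSum_succ (X : ℕ → ℕ) (t : ℕ) : binSum X (t + 1) = binSum X t + X t :=
  Finset.sum_range_succ _ _

lemma binSum_zero (X : ℕ → ℕ) : binSum X 0 = 0 := Finset.sum_range_zero _

lemma binSum_mono (X : ℕ → ℕ) : Monotone (binSum X) :=
  monotone_nat_of_le_succ fun t => by rw [binSum_succ]; omega

lemma le_binSum {X : ℕ → ℕ} (hX : IsInfConf X) (t : ℕ) : t ≤ binSum X t := by
  induction t with
  | zero => omega
  | succ t ih => have := hX t; rw [binSum_succ]; omega

lemma binSum_proj (n : ℕ) (X : ℕ → ℕ) (t : ℕ) : binSum (proj n X) t = min n (binSum X t) := by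
  induction t with
  | zero => simp [binSum_zero]
  | succ t ih => rw [binSum_succ, binSum_succ, ih, proj]; omega

/-- Where the `k`-th ball lies outside bin `0`, it lies in some bin `a + 1`, and the move adds a
ball to bin `a`. -/
lemma move_of_lt {k a : ℕ} {X : ℕ → ℕ} (h1 : binSum X (a + 1) < k)
    (h2 : k ≤ binSum X (a + 2)) :
    move k X = fun t => if t = a then X t + 1 else X t := by
  have h0 : ¬ k ≤ X 0 := by
    have := binSum_mono X (show 1 ≤ a + 1 by omega)
    rw [binSum_succ X 0, binSum_zero] at this
    omega
  have hs : sInf {b : ℕ | k ≤ binSum X (b + 1)} = a + 1 := by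
    apply le_antisymm
    · exact Nat.sInf_le h2
    · refine le_csInf ⟨a + 1, h2⟩ fun b hb => ?_
      by_contra hlt
      have := binSum_mono X (show b + 1 ≤ a + 1 by omega)
      simp only [Set.mem_ofPred_eq] at hb
      omega
  rw [move, if_neg h0, hs]
  rfl

lemma move_of_le {k : ℕ} {X : ℕ → ℕ} (h : k ≤ X 0) :
    move k X = fun t => if t = 0 then 1 else X (t - 1) := by
  rw [move, if_pos h]

/-- In an infinite configuration the total number of balls passes `n` inside exactly one bin. -/
lemma exists_bin {X : ℕ → ℕ} (hX : IsInfConf X) (n : ℕ) :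
    ∃ b, binSum X b ≤ n ∧ n < binSum X (b + 1) := by
  have hex : ∃ b, n < binSum X (b + 1) := ⟨n, le_binSum hX (n + 1)⟩
  classical
  refine ⟨Nat.find hex, ?_, Nat.find_spec hex⟩
  rcases hb : Nat.find hex with _ | b
  · rw [binSum_zero]; omega
  · have := Nat.find_min hex (m := b) (by omega)
    omega

lemma exists_bin_of_lt {k : ℕ} {X : ℕ → ℕ} (hX : IsInfConf X) (h : X 0 < k) :
    ∃ a, binSum X (a + 1) < k ∧ k ≤ binSum X (a + 2) := by
  obtain ⟨b, h1, h2⟩ := exists_bin hX (k - 1)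
  rcases b with _ | a
  · rw [binSum_succ, binSum_zero] at h2
    omega
  · exact ⟨a, by omega, by rw [show a + 2 = a + 1 + 1 from rfl]; omega⟩

lemma isInfConf_move {k : ℕ} {X : ℕ → ℕ} (hX : IsInfConf X) : IsInfConf (move k X) := by
  intro t
  unfold move
  have h1 := hX t
  have h2 := hX (t - 1)
  split_ifs <;> dsimp only <;> split_ifs <;> omega

/-- Deleting the leftmost of `n + 1` balls leaves the `n` rightmost ones. -/
lemma removeLeft_proj {n : ℕ} {X : ℕ → ℕ} (hX : IsInfConf X) :
    removeLeft (proj (n + 1) X) = proj n X := by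
  obtain ⟨b, h1, h2⟩ := exists_bin hX n
  have hs : sSup {c : ℕ | 0 < proj (n + 1) X c} = b := by
    apply IsGreatest.csSup_eq
    constructor
    · have := hX b
      simp only [Set.mem_ofPred_eq, proj]
      omega
    · intro c hc
      by_contra hlt
      have := binSum_mono X (show b + 1 ≤ c by omega)
      simp only [Set.mem_ofPred_eq, proj] at hc
      omega
  funext t
  rw [removeLeft, hs]
  rw [binSum_succ] at h2
  rcases lt_trichotomy t b with h | h | h
  · have := binSum_mono X (show t + 1 ≤ b by omega)
    rw [binSum_succ] at this
    rw [if_neg (by omega), proj, proj]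
    omega
  · subst h
    rw [if_pos rfl, proj, proj]
    omega
  · have := binSum_mono X (show b + 1 ≤ t by omega)
    rw [binSum_succ] at this
    rw [if_neg (by omega), proj, proj]
    omega

/-- Adding a ball keeps track of one more ball: the `k`-th ball from the right is among the `n`
rightmost ones, so the projection does not affect where the new ball goes. -/
lemma move_proj {k n : ℕ} {X : ℕ → ℕ} (hkn : k ≤ n) (hX : IsInfConf X) :
    move k (proj n X) = proj (n + 1) (move k X) := by
  by_cases h : k ≤ X 0
  · have h' : k ≤ proj n X 0 := by rw [proj, binSum_zero]; omega
    have hsum : ∀ t, binSum (fun t => if t = 0 then 1 else X (t - 1)) (t + 1)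
        = 1 + binSum X t := by
      intro t
      induction t with
      | zero => simp [binSum_succ, binSum_zero]
      | succ t ih => rw [binSum_succ, ih, binSum_succ]; simp; omega
    rw [move_of_le h, move_of_le h']
    funext t
    rcases t with _ | t
    · simp [proj, binSum_zero]
    · simp only [proj, hsum]
      simp only [Nat.add_eq_zero_iff, one_ne_zero, and_false, if_false, Nat.add_sub_cancel]
      omega
  · obtain ⟨a, h1, h2⟩ := exists_bin_of_lt hX (show X 0 < k by omega)
    have hsum : ∀ t, binSum (fun t => if t = a then X t + 1 else X t) t
        = binSum X t + if a < t then 1 else 0 := by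
      intro t
      induction t with
      | zero => simp [binSum_zero]
      | succ t ih => rw [binSum_succ, ih, binSum_succ]; split_ifs <;> omega
    rw [move_of_lt h1 h2, move_of_lt (a := a) (by rw [binSum_proj]; omega)
      (by rw [binSum_proj]; omega)]
    funext t
    simp only [proj, hsum]
    rcases lt_trichotomy t a with h | h | h
    · have := binSum_mono X (show t + 1 ≤ a + 1 by omega)
      rw [binSum_succ] at this
      rw [if_neg (by omega), if_neg (by omega), if_neg (by omega)]
      omega
    · subst h
      rw [binSum_succ] at h1
      rw [if_pos rfl, if_pos rfl, if_neg (by omega)]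
      omega
    · rw [if_neg (by omega), if_neg (by omega), if_pos h]
      omega

lemma moveFin_proj {k n : ℕ} {X : ℕ → ℕ} (hkn : k ≤ n) (hX : IsInfConf X) :
    moveFin k (proj n X) = proj n (move k X) := by
  rw [moveFin, move_proj hkn hX, removeLeft_proj (isInfConf_move hX)]

lemma moveFin_iterate_proj {k n : ℕ} {X : ℕ → ℕ} (hkn : k ≤ n) (hX : IsInfConf X) (m : ℕ) :
    (moveFin k)^[m] (proj n X) = proj n ((move k)^[m] X) := by
  induction m generalizing X with
  | zero => rfl
  | succ m ih =>
    rw [Function.iterate_succ_apply, Function.iterate_succ_apply, moveFin_proj hkn hX,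
      ih (isInfConf_move hX)]

/-! ### Explicit iterates of the move -/

lemma move_iterate_fill {k m : ℕ} {X : ℕ → ℕ} (h : X 0 + m ≤ k) (h2 : k ≤ X 0 + X 1) :
    (move k)^[m] X = fun t => if t = 0 then X 0 + m else X t := by
  induction m with
  | zero => funext t; by_cases ht : t = 0 <;> simp [ht]
  | succ m ih =>
    rw [Function.iterate_succ_apply', ih (by omega)]
    rw [move_of_lt (a := 0)]
    · funext t
      by_cases ht : t = 0 <;> simp [ht]
      omega
    · simp [binSum_succ, binSum_zero]
      omega
    · simp [binSum_succ, binSum_zero]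
      omega

/-- After `k * q + s` moves with `1 ≤ s ≤ k`, here `s = s' + 1`, there are `q` new bins with `k`
balls and a rightmost new bin with `s` balls. -/
lemma move_iterate_new {k : ℕ} {X : ℕ → ℕ} (h : k ≤ X 0) (q s' : ℕ) (hs : s' < k) :
    (move k)^[k * q + (s' + 1)] X =
      fun t => if t = 0 then s' + 1 else if t ≤ q then k else X (t - q - 1) := by
  induction q generalizing s' with
  | zero =>
    induction s' with
    | zero =>
      rw [show k * 0 + (0 + 1) = 1 by omega, Function.iterate_one, move_of_le h]
      funext t
      by_cases ht : t = 0 <;> simp [ht]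
    | succ s' ih =>
      rw [← add_assoc, Function.iterate_succ_apply', ih (by omega), move_of_lt (a := 0)]
      · funext t
        by_cases ht : t = 0 <;> simp [ht]
      · simp [binSum_succ, binSum_zero]
        omega
      · simp [binSum_succ, binSum_zero]
        omega
  | succ q ihq =>
    induction s' with
    | zero =>
      -- The rightmost bin is full after `k * q + k` moves, so the next move creates a bin.
      rw [← add_assoc, Function.iterate_succ_apply',
        show k * (q + 1) = k * q + (k - 1 + 1) by rw [mul_add]; omega,
        ihq (k - 1) (by omega), move_of_le (by simp; omega)]
      funext t
      rcases t with _ | _ | t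
      · simp
      · simp; omega
      · by_cases ht : t + 1 ≤ q
        · simp [ht]
        · simp [ht, show t + 1 + 1 - (q + 1) = t + 1 - q by omega]
    | succ s' ih =>
      rw [← add_assoc, Function.iterate_succ_apply', ih (by omega), move_of_lt (a := 0)]
      · funext t
        by_cases ht : t = 0 <;> simp [ht]
      · simp [binSum_succ, binSum_zero]
        omega
      · simp [binSum_succ, binSum_zero]

/-! ### Projections of the explicit configurations -/

lemma ofList_replicate (d k a : ℕ) :
    ofList (List.replicate d k ++ [a]) =
      fun t => if t = 0 then a else if t ≤ d then k else 0 := by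
  funext t
  rcases t with _ | t
  · simp [ofList]
  · by_cases h : t + 1 ≤ d
    · simp [ofList, List.getD_eq_getElem?_getD, h]
    · simp [ofList, List.getD_eq_getElem?_getD, h]

lemma ofList_cons_replicate (i d k a : ℕ) :
    ofList (i :: (List.replicate d k ++ [a])) =
      fun t => if t = 0 then a else if t ≤ d then k else if t = d + 1 then i else 0 := by
  funext t
  rcases t with _ | t
  · simp [ofList]
  · rcases lt_trichotomy t d with h | h | h
    · simp [ofList, List.getD_eq_getElem?_getD, List.getElem?_append, h]
    · simp [ofList, List.getD_eq_getElem?_getD, h]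
    · simp [ofList, List.getD_eq_getElem?_getD, List.getElem?_append,
        show ¬ t < d by omega, show ¬ t + 1 ≤ d by omega, show t ≠ d by omega,
        show t - d ≠ 0 by omega]

/-- The projection to `a + k * q + c` balls of a configuration `[…, W (q + 1), k, …, k, a]` with
`q` bins of `k` balls. -/
lemma proj_blocks {W : ℕ → ℕ} {k q a c n : ℕ} (h0 : W 0 = a)
    (hW : ∀ t, 1 ≤ t → t ≤ q → W t = k) (hc : c ≤ W (q + 1)) (hn : n = a + k * q + c) :
    proj n W = fun t => if t = 0 then a else if t ≤ q then k else if t = q + 1 then c else 0 := by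
  have hsum : ∀ t, t ≤ q → binSum W (t + 1) = a + k * t := by
    intro t
    induction t with
    | zero => intro _; rw [binSum_succ, binSum_zero, h0]; omega
    | succ t ih =>
      intro ht
      rw [binSum_succ, ih (by omega), hW (t + 1) (by omega) ht, mul_add]
      omega
  funext t
  rcases t with _ | t
  · simp [proj, binSum_zero, h0]
    nlinarith
  · rcases lt_trichotomy t q with h | h | h
    · have hm : k * (t + 1) ≤ k * q := Nat.mul_le_mul_left k (by omega)
      rw [mul_add] at hm
      simp only [proj]
      rw [hsum t (by omega), hW (t + 1) (by omega) (by omega), if_neg (by omega),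
        if_pos (by omega)]
      omega
    · subst h
      simp only [proj]
      rw [hsum t le_rfl, if_neg (by omega), if_neg (by omega), if_pos trivial]
      omega
    · have hm := binSum_mono W (show q + 1 + 1 ≤ t + 1 by omega)
      rw [binSum_succ W (q + 1), hsum q le_rfl] at hm
      simp only [proj]
      rw [if_neg (by omega), if_neg (by omega), if_neg (by omega)]
      omega

/-- The infinite configuration `[…, 1, 1, j, l - j]` extending `Y_j`; for `j = 0`, where bin `1`
must not be empty, it is `[…, 1, 1, l]`. -/
def yExt (l j : ℕ) : ℕ → ℕ :=
  fun t => if t = 0 then l - j else if t = 1 then max j 1 else 1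

lemma yConf_eq_proj {l j : ℕ} (hj : j < l) : yConf l j = proj l (yExt l j) := by
  have h := proj_blocks (W := yExt l j) (k := 0) (q := 0) (a := l - j) (c := j) (n := l)
    (by simp [yExt]) (by intro t h1 h2; omega) (by simp [yExt]) (by omega)
  rw [h, yConf]
  split_ifs with h0
  · have := ofList_replicate 0 0 l
    simp only [List.replicate_zero, List.nil_append] at this
    rw [this]
    funext t
    subst h0
    simp
  · have := ofList_cons_replicate j 0 0 (l - j)
    simp only [List.replicate_zero, List.nil_append] at this
    rw [this]

/-- Lemma 4, part 2. For `2 ≤ k < l`, `l = kd + r`, and any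
`0 ≤ j ≤ l-1`, one has `φ_k^{l-k}(Y_j) = X_{(k-l+j)₊}` (truncated ℕ-subtraction
`k + j - l` realizes the positive part `(k - l + j)₊`). -/
theorem iterate_moveFin_yConf_eq_distConf (k l d r : ℕ) (hk : 2 ≤ k) (hkl : k < l)
    (hd : 1 ≤ d) (hr : 1 ≤ r) (hrk : r ≤ k) (hl : l = k * d + r) :
    ∀ j : ℕ, j ≤ l - 1 →
      (moveFin k)^[l - k] (yConf l j) = distConf k d r (k + j - l) := by
  intro j hj
  have hX : IsInfConf (yExt l j) := by
    intro t
    unfold yExt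
    split_ifs <;> omega
  have hX0 : yExt l j 0 = l - j := by simp [yExt]
  have hX1 : yExt l j 1 = max j 1 := by simp [yExt]
  rw [yConf_eq_proj (by omega), moveFin_iterate_proj hkl.le hX]
  obtain ⟨e, rfl⟩ : ∃ e, d = e + 1 := ⟨d - 1, by omega⟩
  rw [mul_add, mul_one] at hl
  by_cases hkj : k ≤ l - j
  · -- The `k` remaining old balls all lie in the bin of `l - j` balls.
    rw [show l - k = k * e + (r - 1 + 1) by omega,
      move_iterate_new (by omega) e (r - 1) (by omega),
      proj_blocks (k := k) (q := e) (a := r) (c := k) (n := l)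
        (by simp; omega) (by intro t h1 h2; simp [h2]; omega) (by simp [hX0]; omega) (by omega),
      show k + j - l = 0 by omega, distConf, if_pos rfl, ofList_replicate]
    funext t
    split_ifs <;> omega
  · obtain ⟨i, hi⟩ : ∃ i, i = k + j - l := ⟨_, rfl⟩
    rw [← hi, distConf, if_neg (by omega)]
    by_cases him : l - k ≤ i
    · -- Fewer than `k` moves are made, which forces `d = 1`, and no bin is created.
      have he : e = 0 := by
        rcases e with _ | e
        · rfl
        · rw [mul_add] at hl; omega
      subst he
      rw [move_iterate_fill (by omega) (by omega),
        proj_blocks (k := k) (q := 0) (a := k + r - i) (c := i) (n := l)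
          (by simp; omega) (by intro t h1 h2; omega) (by simp [hX1]; omega) (by omega),
        if_neg (by omega), ofList_cons_replicate]
    · -- The first `i` moves fill the rightmost bin of `Y_j` up to `k` balls.
      rw [show l - k = (l - k - i) + i by omega, Function.iterate_add_apply,
        move_iterate_fill (m := i) (by omega) (by omega)]
      by_cases hir : i < r
      · rw [if_pos hir, show l - k - i = k * e + (r - i - 1 + 1) by omega,
          move_iterate_new (by simp; omega) e (r - i - 1) (by omega),
          proj_blocks (k := k) (q := e + 1) (a := r - i) (c := i) (n := l)
            (by simp; omega) ?_ (by simp [show e + 1 + 1 - e - 1 = 1 by omega, hX1]; omega)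
            (by rw [mul_add]; omega),
          ofList_cons_replicate]
        intro t h1 h2
        rcases Nat.lt_or_ge e t with h | h
        · obtain rfl : t = e + 1 := by omega
          simp; omega
        · simp [h]; omega
      · obtain ⟨f, rfl⟩ : ∃ f, e = f + 1 := ⟨e - 1, by
          rcases e with _ | e
          · omega
          · rfl⟩
        rw [mul_add] at hl
        rw [if_neg hir, show l - k - i = k * f + (k + r - i - 1 + 1) by omega,
          move_iterate_new (by simp; omega) f (k + r - i - 1) (by omega),
          proj_blocks (k := k) (q := f + 1) (a := k + r - i) (c := i) (n := l)
            (by simp; omega) ?_ (by simp [show f + 1 + 1 - f - 1 = 1 by omega, hX1]; omega)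
            (by rw [mul_add]; omega),
          ofList_cons_replicate]
        · rfl
        intro t h1 h2
        rcases Nat.lt_or_ge f t with h | h
        · obtain rfl : t = f + 1 := by omega
          simp; omega
        · simp [h]; omega
end

section
/- Merging identity: let l ≥ 2 and let i_1, …, i_p be p ≥ 2 positive integers summing to l. Then φ_l^{i_1}([i_1, i_2, …, i_p]) = [i_1 + i_2, i_3, …, i_p] as l-configurations. -/
/-!
While the leftmost bin of `[a, b, …]` is nonempty, the `l`-th ball from the right is the
leftmost ball of all, so it lies in the leftmost bin. Hence `φ_l` adds a ball to the second bin
from the left and removes one from the leftmost bin, that is, `[a + 1, b, …]` becomes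
`[a, b + 1, …]` (`moveFin_ofList_cons_cons`). After `a` such moves the configuration is
`[0, a + b, …]`, and an empty leftmost bin can be dropped from the notation.
-/

open Finset

theorem ofList_cons (a : ℕ) (L : List ℕ) (t : ℕ) :
    ofList (a :: L) t = if t = L.length then a else ofList L t := by
  unfold ofList
  rw [List.reverse_cons]
  rcases lt_trichotomy t L.length with h | h | h
  · rw [List.getD_append _ _ _ _ (by simpa using h), if_neg h.ne]
  · subst h
    rw [List.getD_append_right _ _ _ _ (by simp)]
    simp
  · rw [List.getD_append_right _ _ _ _ (by simpa using h.le), if_neg h.ne',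
      List.getD_eq_default _ _ (by simp; omega), List.getD_eq_default _ _ (by simp; omega)]

theorem ofList_eq_zero (L : List ℕ) (t : ℕ) (h : L.length ≤ t) : ofList L t = 0 :=
  List.getD_eq_default _ _ (by simpa using h)

theorem ofList_zero_cons (L : List ℕ) : ofList (0 :: L) = ofList L := by
  funext t
  rw [ofList_cons]
  split_ifs with h
  · exact (ofList_eq_zero L t h.ge).symm
  · rfl

theorem binSum_ofList_cons (a : ℕ) (L : List ℕ) :
    binSum (ofList (a :: L)) L.length = binSum (ofList L) L.length := by
  refine Finset.sum_congr rfl fun m hm => ?_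
  rw [ofList_cons, if_neg (Finset.mem_range.mp hm).ne]

theorem binSum_ofList (L : List ℕ) : binSum (ofList L) L.length = L.sum := by
  induction L with
  | nil => simp [binSum]
  | cons a L ih =>
    have h : binSum (ofList (a :: L)) (L.length + 1)
        = binSum (ofList (a :: L)) L.length + ofList (a :: L) L.length :=
      Finset.sum_range_succ _ _
    rw [List.length_cons, h, binSum_ofList_cons, ih, ofList_cons, if_pos rfl, List.sum_cons,
      add_comm]

theorem binSum_mono_s15 (X : ℕ → ℕ) {s t : ℕ} (h : s ≤ t) : binSum X s ≤ binSum X t :=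
  Finset.sum_le_sum_of_subset (Finset.range_mono h)

/-- With `l` the total number of balls, the bin containing the `l`-th ball from the right is the
leftmost one. -/
theorem sInf_binSum_ofList (a : ℕ) (L : List ℕ) :
    sInf {t : ℕ | a + 1 + L.sum ≤ binSum (ofList ((a + 1) :: L)) (t + 1)} = L.length := by
  refine IsLeast.csInf_eq ⟨?_, fun t ht => ?_⟩
  · exact (binSum_ofList ((a + 1) :: L)).ge
  · by_contra! hlt
    have h := ht.trans (binSum_mono_s15 _ (show t + 1 ≤ L.length from hlt))
    rw [binSum_ofList_cons, binSum_ofList] at h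
    omega

theorem move_ofList_cons_cons (a b : ℕ) (L : List ℕ) :
    move (a + 1 + b + L.sum) (ofList ((a + 1) :: b :: L)) =
      ofList ((a + 1) :: (b + 1) :: L) := by
  -- The rightmost bin belongs to `b :: L`, so it holds fewer than `l` balls.
  have h0 : ¬ a + 1 + b + L.sum ≤ ofList ((a + 1) :: b :: L) 0 := by
    have h := binSum_mono_s15 (ofList ((a + 1) :: b :: L)) (show 1 ≤ (b :: L).length by simp)
    rw [binSum_ofList_cons, binSum_ofList, List.sum_cons] at h
    simp only [binSum, Finset.sum_range_one] at h
    omega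
  have hs := sInf_binSum_ofList a (b :: L)
  rw [List.sum_cons, ← add_assoc] at hs
  funext t
  rw [move, if_neg h0, hs]
  simp only [ofList_cons, List.length_cons, Nat.add_sub_cancel]
  split_ifs <;> omega

theorem removeLeft_ofList_cons (a : ℕ) (L : List ℕ) :
    removeLeft (ofList ((a + 1) :: L)) = ofList (a :: L) := by
  have hs : sSup {t : ℕ | 0 < ofList ((a + 1) :: L) t} = L.length := by
    refine IsGreatest.csSup_eq ⟨?_, fun t ht => ?_⟩
    · simp [ofList_cons]
    · by_contra! hlt
      exact (Nat.ne_of_gt ht) (ofList_eq_zero _ _ hlt)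
  funext t
  rw [removeLeft, hs]
  simp only [ofList_cons]
  split_ifs <;> simp

theorem moveFin_ofList_cons_cons (a b : ℕ) (L : List ℕ) :
    moveFin (a + 1 + b + L.sum) (ofList ((a + 1) :: b :: L)) = ofList (a :: (b + 1) :: L) := by
  rw [moveFin, move_ofList_cons_cons, removeLeft_ofList_cons]

theorem iterate_moveFin_ofList (a b : ℕ) (L : List ℕ) :
    (moveFin (a + b + L.sum))^[a] (ofList (a :: b :: L)) = ofList ((a + b) :: L) := by
  induction a generalizing b with
  | zero => simp [ofList_zero_cons]
  | succ a ih =>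
    rw [Function.iterate_succ_apply, moveFin_ofList_cons_cons,
      show a + 1 + b = a + (b + 1) by omega, ih]

/-- Merging identity: if `a, b` and the entries of `L` are
positive and `a + b + L.sum = l` (so `[a, b, …]` is an `l`-configuration with at
least two bins), then `φ_l^{a}([a, b, …]) = [a + b, …]`. -/
theorem iterate_moveFin_merge (l : ℕ) (hl : 2 ≤ l) (a b : ℕ) (L : List ℕ)
    (ha : 0 < a) (hb : 0 < b) (hpos : ∀ x ∈ L, 0 < x)
    (hsum : a + b + L.sum = l) :
    (moveFin l)^[a] (ofList (a :: b :: L)) = ofList ((a + b) :: L) := by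
  subst hsum
  exact iterate_moveFin_ofList a b L
end
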